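/- Suppose F ∈ D(Λ), i.e. its quantile function Q satisfies de Haan's criterion. Then for each fixed β > 0, c(s, β)/c(s) → 1/β as s ↓ 0. -/

import Mathlib

open MeasureTheory Filter Set

noncomputable section

/-- The distribution function of a measure on `ℝ`. -/
def distFun (μ : Measure ℝ) : ℝ → ℝ := fun x => (μ (Set.Iic x)).toReal

/-- The quantile (left-continuous inverse) function of a distribution function. -/
def quantileFun (F : ℝ → ℝ) : ℝ → ℝ := fun s => sInf {x : ℝ | s ≤ F x}

/-- de Haan's criterion for the Gumbel domain of attraction, in terms of the
quantile function `Q`. -/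
def DeHaanGumbel (Q : ℝ → ℝ) : Prop :=
  ∀ x y z w : ℝ, 0 < x → 0 < y → 0 < z → 0 < w → y ≠ w →
    Tendsto (fun s : ℝ => (Q (1 - s * x) - Q (1 - s * z)) / (Q (1 - s * y) - Q (1 - s * w)))
      (nhdsWithin 0 (Set.Ioi 0))
      (nhds ((Real.log x - Real.log z) / (Real.log y - Real.log w)))

/-- The Lebesgue–Stieltjes measure `dQ` on `(0,1)` associated with the quantile function of
`F`: it coincides with the pushforward of Lebesgue measure under `F`
(for an interval `(a,b] ⊆ (0,1)` it has mass `Q(b+) - Q(a+)`). -/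
def dQ (μ : Measure ℝ) : Measure ℝ := Measure.map (distFun μ) volume

/-- `c(s,β) = s^{-β} ∫_{(1-s,1)} (1-u)^β dQ(u)`. -/
def cBeta (μ : Measure ℝ) (s β : ℝ) : ℝ :=
  s ^ (-β) * ∫ u in Set.Ioo (1 - s) 1, (1 - u) ^ β ∂(dQ μ)

/-- `c(s) = c(s,1) = s⁻¹ ∫_{(1-s,1)} (1-u) dQ(u)`. -/
def cFun (μ : Measure ℝ) (s : ℝ) : ℝ := cBeta μ s 1

/-- `σ²(s) = ∫_{(1-s,1)} ∫_{(1-s,1)} (min(u,v) - uv) dQ(u) dQ(v)`. -/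
def sigmaSq (μ : Measure ℝ) (s : ℝ) : ℝ :=
  ∫ v in Set.Ioo (1 - s) 1, (∫ u in Set.Ioo (1 - s) 1, (min u v - u * v) ∂(dQ μ)) ∂(dQ μ)

/-- A function is slowly varying at zero if `L(λ s)/L(s) → 1` as `s ↓ 0` for every `λ > 0`. -/
def SlowlyVaryingAtZero (L : ℝ → ℝ) : Prop :=
  ∀ lam : ℝ, 0 < lam →
    Tendsto (fun s : ℝ => L (lam * s) / L s) (nhdsWithin 0 (Set.Ioi 0)) (nhds 1)

/-- Condition (K) on the sequence of integers `k n`. -/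
def CondK (k : ℕ → ℕ) : Prop :=
  (∀ n : ℕ, 1 ≤ k n ∧ k n ≤ n) ∧ Tendsto k atTop atTop ∧
    Tendsto (fun n : ℕ => (k n : ℝ) / (n : ℝ)) atTop (nhds 0)

/-!
Normalise by `A(s) = Q(1 - s/e) - Q(1 - s)`, so that de Haan's criterion reads
`(Q(1 - st) - Q(1 - s)) / A(s) → -log t`. After the substitution `u = 1 - st`, layer cake gives
`c(s, β) = ∫₀¹ β t^(β-1) dQ((1 - s, 1 - st)) dt`, whence
`c(s, β) / A(s) → ∫₀¹ β t^(β-1) (-log t) dt = 1/β` by dominated convergence; dividing by the case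
`β = 1` eliminates `A`. The domination is a Potter bound: `A(s/e) ≤ e^δ A(s)` for small `s`, and
summing the increments of `Q` over the points `1 - s e^(-n)` gives a geometric series, so that
`(Q(1 - st) - Q(1 - s)) / A(s) = O(t^(-δ))` uniformly in small `s`.
-/

open Real
open scoped Topology

section LayerCake

variable {α : Type*} [MeasurableSpace α] {ρ : Measure α} {f : α → ℝ} {p : ℝ}

lemma integral_rpow_eq_integral_measureReal_lt (f_nn : 0 ≤ᵐ[ρ] f) (f_mble : AEMeasurable f ρ)
    (hfin : ∀ t > 0, ρ {a | t < f a} ≠ ⊤) (hp : 0 < p) :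
    ∫ a, f a ^ p ∂ρ = ∫ t in Ioi 0, p * t ^ (p - 1) * ρ.real {a | t < f a} := by
  have tail_mble : Measurable fun t => ρ {a | t < f a} :=
    Antitone.measurable fun _ _ hst => measure_mono fun _ ha => hst.trans_lt ha
  have tail_eq : ∀ t ∈ Ioi (0 : ℝ), ENNReal.ofReal (t ^ (p - 1) * ρ.real {a | t < f a}) =
      ρ {a | t < f a} * ENNReal.ofReal (t ^ (p - 1)) := fun t ht => by
    rw [ENNReal.ofReal_mul (rpow_nonneg (le_of_lt ht) _), ofReal_measureReal (hfin t ht), mul_comm]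
  simp_rw [mul_assoc]
  rw [integral_const_mul,
    integral_eq_lintegral_of_nonneg_ae (f_nn.mono fun a ha => rpow_nonneg ha p)
      (f_mble.pow_const p).aestronglyMeasurable,
    lintegral_rpow_eq_lintegral_meas_lt_mul ρ f_nn f_mble hp, ENNReal.toReal_mul,
    ENNReal.toReal_ofReal hp.le,
    integral_eq_lintegral_of_nonneg_ae
      (ae_restrict_of_forall_mem measurableSet_Ioi fun t ht =>
        mul_nonneg (rpow_nonneg (le_of_lt ht) _) measureReal_nonneg)
      (Measurable.aestronglyMeasurable (by
        have := tail_mble.ennreal_toReal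
        simp only [Measure.real]
        fun_prop)),
    setLIntegral_congr_fun measurableSet_Ioi tail_eq]

lemma setIntegral_rescaled_rpow_eq {ν : Measure ℝ} {s : ℝ} (hs : 0 < s)
    (hfin : ∀ t ∈ Ioo (0 : ℝ) 1, ν (Ioo (1 - s) (1 - s * t)) ≠ ⊤) (hp : 0 < p) :
    ∫ u in Ioo (1 - s) 1, ((1 - u) / s) ^ p ∂ν =
      ∫ t in Ioo 0 1, p * t ^ (p - 1) * ν.real (Ioo (1 - s) (1 - s * t)) := by
  have superlevel : ∀ t > 0, ν.restrict (Ioo (1 - s) 1) {u | t < (1 - u) / s} =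
      ν (Ioo (1 - s) (1 - s * t)) := fun t ht => by
    rw [Measure.restrict_apply (measurableSet_lt measurable_const (by fun_prop))]
    congr 1
    ext u
    have : 0 < s * t := mul_pos hs ht
    simp only [mem_inter_iff, mem_ofPred_eq, mem_Ioo, lt_div_iff₀' hs]
    constructor <;> rintro ⟨_, _⟩ <;> grind
  have empty : ∀ t ≥ 1, Ioo (1 - s) (1 - s * t) = ∅ := fun t ht => Ioo_eq_empty (by nlinarith)
  have nonneg : 0 ≤ᵐ[ν.restrict (Ioo (1 - s) 1)] fun u => (1 - u) / s :=
    ae_restrict_of_forall_mem measurableSet_Ioo fun u hu =>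
      div_nonneg (sub_nonneg.2 hu.2.le) hs.le
  have superlevel_ne_top : ∀ t > 0, ν.restrict (Ioo (1 - s) 1) {u | t < (1 - u) / s} ≠ ⊤ :=
    fun t ht => by
      rw [superlevel t ht]
      rcases lt_or_ge t 1 with lt_one | one_le
      · exact hfin t ⟨ht, lt_one⟩
      · simp [empty t one_le]
  rw [integral_rpow_eq_integral_measureReal_lt nonneg (by fun_prop) superlevel_ne_top hp,
    setIntegral_congr_fun measurableSet_Ioi fun t ht => by
      rw [Measure.real, superlevel t ht]]
  refine setIntegral_eq_of_subset_of_forall_sdiff_eq_zero measurableSet_Ioi Ioo_subset_Ioi_self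
    fun t ht => ?_
  simp [empty t (not_lt.1 fun lt_one => ht.2 ⟨ht.1, lt_one⟩)]

end LayerCake

section UnitInterval

variable {p : ℝ}

lemma setIntegral_Ioo_comp_rpow (g : ℝ → ℝ) (hp : 0 < p) :
    ∫ t in Ioo 0 1, p * t ^ (p - 1) * g (t ^ p) = ∫ y in Ioo 0 1, g y := by
  have rpow_mem_iff : ∀ t ∈ Ioi (0 : ℝ), t ^ p ∈ Ioo (0 : ℝ) 1 ↔ t ∈ Ioo (0 : ℝ) 1 :=
    fun t (ht : 0 < t) => by
      simp [ht, rpow_pos_of_pos ht, rpow_lt_one_iff_of_pos ht, hp, hp.not_gt]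
  have indicator_eq : ∀ t ∈ Ioi (0 : ℝ), p * t ^ (p - 1) * (Ioo 0 1).indicator g (t ^ p) =
      (Ioo 0 1).indicator (fun t => p * t ^ (p - 1) * g (t ^ p)) t := fun t ht => by
    by_cases mem : t ∈ Ioo (0 : ℝ) 1 <;> simp [indicator, rpow_mem_iff t ht, mem]
  have h := integral_comp_rpow_Ioi_of_pos (g := (Ioo 0 1).indicator g) hp
  simp_rw [smul_eq_mul] at h
  rwa [setIntegral_congr_fun measurableSet_Ioi indicator_eq,
    setIntegral_indicator measurableSet_Ioo, setIntegral_indicator measurableSet_Ioo,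
    inter_eq_right.2 Ioo_subset_Ioi_self] at h

lemma setIntegral_mul_rpow_mul_neg_log (hp : 0 < p) :
    ∫ t in Ioo (0 : ℝ) 1, p * t ^ (p - 1) * -log t = 1 / p :=
  calc ∫ t in Ioo (0 : ℝ) 1, p * t ^ (p - 1) * -log t
      = ∫ t in Ioo (0 : ℝ) 1, p * t ^ (p - 1) * (-log (t ^ p) / p) :=
        setIntegral_congr_fun measurableSet_Ioo fun t ht => by
          simp only [log_rpow ht.1]
          field_simp
    _ = ∫ y in Ioo (0 : ℝ) 1, -log y / p := setIntegral_Ioo_comp_rpow (fun y => -log y / p) hp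
    _ = 1 / p := by
        rw [integral_div, ← integral_Ioc_eq_integral_Ioo,
          ← intervalIntegral.integral_of_le zero_le_one]
        simp

lemma one_sub_mul_mem_Ioo {s t : ℝ} (hs : s ∈ Ioo (0 : ℝ) 1) (ht : t ∈ Ioo (0 : ℝ) 1) :
    1 - s * t ∈ Ioo (0 : ℝ) 1 :=
  Ioo.one_sub_mem ⟨mul_pos hs.1 ht.1, mul_lt_one_of_nonneg_of_lt_one_left hs.1.le hs.2 ht.2.le⟩

end UnitInterval

section QuantileFunction

lemma quantileFun_le_iff {F : ℝ → ℝ} (F_mono : Monotone F)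
    (F_cont : ∀ x, ContinuousWithinAt F (Ici x) x) {p : ℝ} (hne : {x | p ≤ F x}.Nonempty)
    (hbdd : BddBelow {x | p ≤ F x}) {x : ℝ} : quantileFun F p ≤ x ↔ p ≤ F x := by
  refine ⟨fun h => le_trans ?_ (F_mono h), fun h => csInf_le hbdd h⟩
  rw [quantileFun, (F_mono.monotoneOn _).map_csInf_of_continuousWithinAt
    ((F_cont _).mono fun y hy => csInf_le hbdd hy) hne hbdd]
  exact le_csInf (hne.image F) (forall_mem_image.2 fun y hy => hy)

variable (μ : Measure ℝ) [IsProbabilityMeasure μ]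

lemma distFun_eq_cdf : distFun μ = ProbabilityTheory.cdf μ :=
  funext fun x => (ProbabilityTheory.cdf_eq_real μ x).symm

lemma monotone_distFun : Monotone (distFun μ) := by
  rw [distFun_eq_cdf]
  exact ProbabilityTheory.monotone_cdf μ

lemma quantileFun_distFun_le_iff {p : ℝ} (hp : p ∈ Ioo (0 : ℝ) 1) {x : ℝ} :
    quantileFun (distFun μ) p ≤ x ↔ p ≤ distFun μ x := by
  refine quantileFun_le_iff (monotone_distFun μ) ?_ ?_ ?_
  · rw [distFun_eq_cdf]
    exact (ProbabilityTheory.cdf μ).right_continuous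
  · obtain ⟨b, hb⟩ :=
      ((ProbabilityTheory.tendsto_cdf_atTop μ).eventually (lt_mem_nhds hp.2)).exists
    exact ⟨b, by simpa only [mem_ofPred_eq, distFun_eq_cdf] using hb.le⟩
  · obtain ⟨b, hb⟩ :=
      ((ProbabilityTheory.tendsto_cdf_atBot μ).eventually (gt_mem_nhds hp.1)).exists
    rw [← distFun_eq_cdf] at hb
    exact ⟨b, fun y hy => ((monotone_distFun μ).reflect_lt (hb.trans_le hy)).le⟩

end QuantileFunction

/-- `ν` is, on `(0, 1)`, the Lebesgue–Stieltjes measure of the nondecreasing left-continuous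
function `Q`. Left-continuity is encoded by the use of half-open intervals `[a, b)`; nothing is
required outside `(0, 1)`, where a quantile function takes junk values. -/
structure IsLebesgueStieltjes (Q : ℝ → ℝ) (ν : Measure ℝ) : Prop where
  monotoneOn : MonotoneOn Q (Ioo 0 1)
  measure_Ico : ∀ ⦃a⦄, a ∈ Ioo (0 : ℝ) 1 → ∀ ⦃b⦄, b ∈ Ioo (0 : ℝ) 1 →
    ν (Ico a b) = ENNReal.ofReal (Q b - Q a)

lemma isLebesgueStieltjes_quantileFun_dQ (μ : Measure ℝ) [IsProbabilityMeasure μ] :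
    IsLebesgueStieltjes (quantileFun (distFun μ)) (dQ μ) where
  monotoneOn a ha b hb hab := by
    rw [quantileFun_distFun_le_iff μ ha]
    exact hab.trans ((quantileFun_distFun_le_iff μ hb).1 le_rfl)
  measure_Ico a ha b hb := by
    rw [dQ, Measure.map_apply (monotone_distFun μ).measurable measurableSet_Ico,
      ← Real.volume_Ico]
    congr 1
    ext x
    rw [mem_preimage, mem_Ico, mem_Ico, quantileFun_distFun_le_iff μ ha, ← not_le, ← not_le,
      quantileFun_distFun_le_iff μ hb]

namespace IsLebesgueStieltjes

variable {Q : ℝ → ℝ} {ν : Measure ℝ} {a b : ℝ}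

lemma measure_Ico_ne_top (hν : IsLebesgueStieltjes Q ν) (ha : a ∈ Ioo (0 : ℝ) 1)
    (hb : b ∈ Ioo (0 : ℝ) 1) : ν (Ico a b) ≠ ⊤ := by
  rw [hν.measure_Ico ha hb]
  exact ENNReal.ofReal_ne_top

lemma measure_Ioo_ne_top (hν : IsLebesgueStieltjes Q ν) (ha : a ∈ Ioo (0 : ℝ) 1)
    (hb : b ∈ Ioo (0 : ℝ) 1) : ν (Ioo a b) ≠ ⊤ :=
  measure_ne_top_of_subset Ioo_subset_Ico_self (hν.measure_Ico_ne_top ha hb)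

lemma measureReal_Ico (hν : IsLebesgueStieltjes Q ν) (ha : a ∈ Ioo (0 : ℝ) 1)
    (hb : b ∈ Ioo (0 : ℝ) 1) (hab : a ≤ b) : ν.real (Ico a b) = Q b - Q a := by
  rw [Measure.real, hν.measure_Ico ha hb,
    ENNReal.toReal_ofReal (sub_nonneg.2 (hν.monotoneOn ha hb hab))]

lemma measureReal_Ioo_le (hν : IsLebesgueStieltjes Q ν) (ha : a ∈ Ioo (0 : ℝ) 1)
    (hb : b ∈ Ioo (0 : ℝ) 1) (hab : a ≤ b) : ν.real (Ioo a b) ≤ Q b - Q a := by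
  rw [← hν.measureReal_Ico ha hb hab]
  exact measureReal_mono Ioo_subset_Ico_self (hν.measure_Ico_ne_top ha hb)

lemma sub_le_measureReal_Ioo (hν : IsLebesgueStieltjes Q ν) (ha : a ∈ Ioo (0 : ℝ) 1)
    (hb : b ∈ Ioo (0 : ℝ) 1) {c : ℝ} (hac : a < c) (hcb : c ≤ b) :
    Q b - Q c ≤ ν.real (Ioo a b) := by
  rw [← hν.measureReal_Ico ⟨ha.1.trans hac, hcb.trans_lt hb.2⟩ hb hcb]
  exact measureReal_mono (fun u hu => ⟨hac.trans_le hu.1, hu.2⟩) (hν.measure_Ioo_ne_top ha hb)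

lemma measureReal_Ioo_one_sub_le (hν : IsLebesgueStieltjes Q ν) {s t : ℝ}
    (hs : s ∈ Ioo (0 : ℝ) 1) (ht : t ∈ Ioo (0 : ℝ) 1) :
    ν.real (Ioo (1 - s) (1 - s * t)) ≤ Q (1 - s * t) - Q (1 - s) :=
  hν.measureReal_Ioo_le (Ioo.one_sub_mem hs) (one_sub_mul_mem_Ioo hs ht)
    (sub_le_sub_left (mul_le_of_le_one_right hs.1.le ht.2.le) 1)

end IsLebesgueStieltjes

/-- The increment `Q(1 - s/e) - Q(1 - s)`, the auxiliary function by which de Haan's criterion is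
normalised. The ratio `e` makes the limits plain logarithms. -/
def gumbelScale (Q : ℝ → ℝ) (s : ℝ) : ℝ := Q (1 - s * exp (-1)) - Q (1 - s)

section GumbelScale

variable {Q : ℝ → ℝ}

lemma sub_eq_sum_gumbelScale (Q : ℝ → ℝ) (s : ℝ) (n : ℕ) :
    Q (1 - s * exp (-1) ^ n) - Q (1 - s) =
      ∑ i ∈ Finset.range n, gumbelScale Q (s * exp (-1) ^ i) := by
  simp only [gumbelScale, mul_assoc, ← pow_succ]
  rw [Finset.sum_range_sub fun i => Q (1 - s * exp (-1) ^ i), pow_zero, mul_one]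

lemma gumbelScale_mul_pow_le {r s₀ : ℝ} (hr : 0 ≤ r)
    (hstep : ∀ s ∈ Ioo 0 s₀, gumbelScale Q (s * exp (-1)) ≤ r * gumbelScale Q s) {s : ℝ}
    (hs : s ∈ Ioo 0 s₀) (n : ℕ) :
    gumbelScale Q (s * exp (-1) ^ n) ≤ r ^ n * gumbelScale Q s := by
  induction n with
  | zero => simp
  | succ n ih =>
    have pow_le_one : exp (-1) ^ n ≤ 1 := pow_le_one₀ (exp_pos _).le (by simp)
    have mem : s * exp (-1) ^ n ∈ Ioo 0 s₀ :=
      ⟨mul_pos hs.1 (by positivity), (mul_le_of_le_one_right hs.1.le pow_le_one).trans_lt hs.2⟩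
    calc gumbelScale Q (s * exp (-1) ^ (n + 1))
        = gumbelScale Q (s * exp (-1) ^ n * exp (-1)) := by rw [pow_succ, mul_assoc]
      _ ≤ r * gumbelScale Q (s * exp (-1) ^ n) := hstep _ mem
      _ ≤ r * (r ^ n * gumbelScale Q s) := by gcongr
      _ = r ^ (n + 1) * gumbelScale Q s := by ring

lemma sub_le_geom_mul_gumbelScale {r s₀ : ℝ} (hr : 1 < r)
    (hstep : ∀ s ∈ Ioo 0 s₀, gumbelScale Q (s * exp (-1)) ≤ r * gumbelScale Q s) {s : ℝ}
    (hs : s ∈ Ioo 0 s₀) (n : ℕ) :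
    Q (1 - s * exp (-1) ^ n) - Q (1 - s) ≤ (r ^ n - 1) / (r - 1) * gumbelScale Q s := by
  rw [sub_eq_sum_gumbelScale, ← geom_sum_eq hr.ne', Finset.sum_mul]
  exact Finset.sum_le_sum fun i _ =>
    gumbelScale_mul_pow_le (zero_le_one.trans hr.le) hstep hs i

end GumbelScale

lemma measurable_measureReal_Ioo_one_sub_mul (ν : Measure ℝ) {s : ℝ} (hs : 0 ≤ s) :
    Measurable fun t => ν.real (Ioo (1 - s) (1 - s * t)) :=
  (Antitone.measurable fun _ _ hab => measure_mono <| Ioo_subset_Ioo_right <|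
    sub_le_sub_left (mul_le_mul_of_nonneg_left hab hs) 1).ennreal_toReal

namespace DeHaanGumbel

variable {Q : ℝ → ℝ} {ν : Measure ℝ}

lemma tendsto_sub_div_gumbelScale (hD : DeHaanGumbel Q) {x z : ℝ} (hx : 0 < x) (hz : 0 < z) :
    Tendsto (fun s => (Q (1 - s * x) - Q (1 - s * z)) / gumbelScale Q s) (𝓝[>] 0)
      (𝓝 (log z - log x)) := by
  have h := hD x (exp (-1)) z 1 hx (exp_pos _) hz one_pos (by simp)
  simpa [gumbelScale, div_neg] using h

lemma eventually_gumbelScale_pos (hD : DeHaanGumbel Q) (hQ : MonotoneOn Q (Ioo 0 1)) :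
    ∀ᶠ s in 𝓝[>] 0, 0 < gumbelScale Q s := by
  have h := hD.tendsto_sub_div_gumbelScale (exp_pos (-1)) one_pos
  simp only [log_one, log_exp, mul_one, sub_neg_eq_add, zero_add] at h
  filter_upwards [h.eventually (lt_mem_nhds one_pos), Ioo_mem_nhdsGT one_pos] with s ratio_pos hs
  have nonneg : 0 ≤ gumbelScale Q s := sub_nonneg.2 <|
    hQ (Ioo.one_sub_mem hs) (one_sub_mul_mem_Ioo hs ⟨exp_pos _, by simp⟩) <|
      sub_le_sub_left (mul_le_of_le_one_right hs.1.le (by simp)) 1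
  exact nonneg.lt_of_ne fun h0 => by simp [← h0] at ratio_pos

lemma eventually_gumbelScale_mul_exp_le (hD : DeHaanGumbel Q) (hQ : MonotoneOn Q (Ioo 0 1))
    {r : ℝ} (hr : 1 < r) :
    ∀ᶠ s in 𝓝[>] 0, gumbelScale Q (s * exp (-1)) ≤ r * gumbelScale Q s := by
  have h := hD.tendsto_sub_div_gumbelScale (mul_pos (exp_pos (-1)) (exp_pos (-1))) (exp_pos (-1))
  have limit_eq : log (exp (-1)) - log (exp (-1) * exp (-1)) = 1 := by
    rw [← exp_add, log_exp, log_exp]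
    ring
  rw [limit_eq] at h
  filter_upwards [h.eventually (gt_mem_nhds hr),
    hD.eventually_gumbelScale_pos hQ] with s ratio_lt pos
  rw [div_lt_iff₀ pos, ← mul_assoc] at ratio_lt
  exact ratio_lt.le

lemma exists_eventually_sub_le_rpow_mul_gumbelScale (hD : DeHaanGumbel Q)
    (hQ : MonotoneOn Q (Ioo 0 1)) {δ : ℝ} (hδ : 0 < δ) :
    ∃ C, ∀ᶠ s in 𝓝[>] 0, ∀ t ∈ Ioo (0 : ℝ) 1,
      Q (1 - s * t) - Q (1 - s) ≤ C * t ^ (-δ) * gumbelScale Q s := by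
  have one_lt : 1 < exp δ := one_lt_exp_iff.2 hδ
  obtain ⟨s₀, hs₀, hstep⟩ :=
    mem_nhdsGT_iff_exists_Ioo_subset.1 (hD.eventually_gumbelScale_mul_exp_le hQ one_lt)
  refine ⟨exp δ / (exp δ - 1), ?_⟩
  filter_upwards [Ioo_mem_nhdsGT hs₀, Ioo_mem_nhdsGT one_pos, hD.eventually_gumbelScale_pos hQ]
    with s hs hs1 pos t ht
  obtain ⟨n, lt_t, t_le⟩ :=
    exists_nat_pow_near_of_lt_one ht.1 ht.2.le (exp_pos (-1)) (exp_lt_one_iff.2 (by norm_num))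
  have pow_le : exp δ ^ n ≤ t ^ (-δ) :=
    calc exp δ ^ n = (exp (-1) ^ n) ^ (-δ) := by
          rw [← exp_nat_mul, ← exp_nat_mul, ← exp_mul]; congr 1; ring
      _ ≤ t ^ (-δ) := rpow_le_rpow_of_nonpos ht.1 t_le (neg_nonpos.2 hδ.le)
  have monotone_step : Q (1 - s * t) ≤ Q (1 - s * exp (-1) ^ (n + 1)) :=
    hQ (one_sub_mul_mem_Ioo hs1 ht)
      (one_sub_mul_mem_Ioo hs1 ⟨pow_pos (exp_pos _) _, lt_t.trans ht.2⟩)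
      (sub_le_sub_left (mul_le_mul_of_nonneg_left lt_t.le hs.1.le) 1)
  calc Q (1 - s * t) - Q (1 - s)
      ≤ Q (1 - s * exp (-1) ^ (n + 1)) - Q (1 - s) :=
        sub_le_sub_right monotone_step _
    _ ≤ (exp δ ^ (n + 1) - 1) / (exp δ - 1) * gumbelScale Q s :=
        sub_le_geom_mul_gumbelScale one_lt hstep hs (n + 1)
    _ ≤ exp δ * t ^ (-δ) / (exp δ - 1) * gumbelScale Q s := by
        have : 0 < exp δ - 1 := sub_pos.2 one_lt
        gcongr
        rw [pow_succ']
        nlinarith [exp_pos δ]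
    _ = exp δ / (exp δ - 1) * t ^ (-δ) * gumbelScale Q s := by ring

lemma tendsto_measureReal_Ioo_div_gumbelScale (hD : DeHaanGumbel Q) (hν : IsLebesgueStieltjes Q ν)
    {t : ℝ} (ht : t ∈ Ioo (0 : ℝ) 1) :
    Tendsto (fun s => ν.real (Ioo (1 - s) (1 - s * t)) / gumbelScale Q s) (𝓝[>] 0)
      (𝓝 (-log t)) := by
  refine tendsto_order.2 ⟨fun a ha => ?_, fun b hb => ?_⟩
  -- Starting at `1 - s * z` avoids a possible atom of `ν` at `1 - s`; then let `z` tend to `1`.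
  · have log_cont : Tendsto (fun z => log z - log t) (𝓝[<] 1) (𝓝 (-log t)) := by
      have := (continuousAt_log one_ne_zero).tendsto.sub_const (log t)
      simp only [log_one, zero_sub] at this
      exact this.mono_left nhdsWithin_le_nhds
    obtain ⟨z, a_lt, hz⟩ :=
      ((log_cont.eventually (lt_mem_nhds ha)).and (Ioo_mem_nhdsLT ht.2)).exists
    filter_upwards [(hD.tendsto_sub_div_gumbelScale ht.1 (ht.1.trans hz.1)).eventually
      (lt_mem_nhds a_lt), hD.eventually_gumbelScale_pos hν.monotoneOn,
      Ioo_mem_nhdsGT one_pos] with s a_lt_ratio pos hs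
    refine a_lt_ratio.trans_le (div_le_div_of_nonneg_right ?_ pos.le)
    exact hν.sub_le_measureReal_Ioo (Ioo.one_sub_mem hs)
      (one_sub_mul_mem_Ioo hs ht)
      (sub_lt_sub_left (mul_lt_of_lt_one_right hs.1 hz.2) 1)
      (sub_le_sub_left (mul_le_mul_of_nonneg_left hz.1.le hs.1.le) 1)
  · have h := hD.tendsto_sub_div_gumbelScale ht.1 one_pos
    simp only [log_one, zero_sub, mul_one] at h
    filter_upwards [h.eventually (gt_mem_nhds hb), hD.eventually_gumbelScale_pos hν.monotoneOn,
      Ioo_mem_nhdsGT one_pos] with s ratio_lt pos hs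
    refine (div_le_div_of_nonneg_right ?_ pos.le).trans_lt ratio_lt
    exact hν.measureReal_Ioo_one_sub_le hs ht

lemma exists_eventually_measureReal_Ioo_div_le (hD : DeHaanGumbel Q)
    (hν : IsLebesgueStieltjes Q ν) {δ : ℝ} (hδ : 0 < δ) :
    ∃ C, ∀ᶠ s in 𝓝[>] 0, ∀ t ∈ Ioo (0 : ℝ) 1,
      ν.real (Ioo (1 - s) (1 - s * t)) / gumbelScale Q s ≤ C * t ^ (-δ) := by
  obtain ⟨C, hC⟩ := hD.exists_eventually_sub_le_rpow_mul_gumbelScale hν.monotoneOn hδ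
  refine ⟨C, ?_⟩
  filter_upwards [hC, hD.eventually_gumbelScale_pos hν.monotoneOn, Ioo_mem_nhdsGT one_pos]
    with s bound pos hs t ht
  exact (div_le_iff₀ pos).2 ((hν.measureReal_Ioo_one_sub_le hs ht).trans (bound t ht))

lemma tendsto_setIntegral_rpow_mul_measureReal_Ioo_div (hD : DeHaanGumbel Q)
    (hν : IsLebesgueStieltjes Q ν) {β : ℝ} (hβ : 0 < β) :
    Tendsto (fun s => ∫ t in Ioo 0 1,
        β * t ^ (β - 1) * (ν.real (Ioo (1 - s) (1 - s * t)) / gumbelScale Q s)) (𝓝[>] 0)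
      (𝓝 (∫ t in Ioo (0 : ℝ) 1, β * t ^ (β - 1) * -log t)) := by
  obtain ⟨C, hC⟩ := hD.exists_eventually_measureReal_Ioo_div_le hν (half_pos hβ)
  refine tendsto_integral_filter_of_dominated_convergence (fun t => β * C * t ^ (β / 2 - 1))
    ?_ ?_ ?_ ?_
  · filter_upwards [Ioo_mem_nhdsGT one_pos] with s hs
    have := measurable_measureReal_Ioo_one_sub_mul ν hs.1.le
    exact Measurable.aestronglyMeasurable (by fun_prop)
  · filter_upwards [hC, hD.eventually_gumbelScale_pos hν.monotoneOn] with s bound pos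
    refine ae_restrict_of_forall_mem measurableSet_Ioo fun t ht => ?_
    have rpow_nonneg : 0 ≤ t ^ (β - 1) := rpow_nonneg ht.1.le _
    rw [norm_of_nonneg (by positivity)]
    calc β * t ^ (β - 1) * (ν.real (Ioo (1 - s) (1 - s * t)) / gumbelScale Q s)
        ≤ β * t ^ (β - 1) * (C * t ^ (-(β / 2))) := by gcongr; exact bound t ht
      _ = β * C * (t ^ (β - 1) * t ^ (-(β / 2))) := by ring
      _ = β * C * t ^ (β / 2 - 1) := by rw [← rpow_add ht.1]; ring_nf
  · exact ((intervalIntegral.integrableOn_Ioo_rpow_iff one_pos).2 (by linarith)).const_mul _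
  · exact ae_restrict_of_forall_mem measurableSet_Ioo fun t ht =>
      (hD.tendsto_measureReal_Ioo_div_gumbelScale hν ht).const_mul _

lemma tendsto_setIntegral_rescaled_rpow_div_gumbelScale (hD : DeHaanGumbel Q)
    (hν : IsLebesgueStieltjes Q ν) {β : ℝ} (hβ : 0 < β) :
    Tendsto (fun s => (∫ u in Ioo (1 - s) 1, ((1 - u) / s) ^ β ∂ν) / gumbelScale Q s) (𝓝[>] 0)
      (𝓝 (1 / β)) := by
  rw [← setIntegral_mul_rpow_mul_neg_log hβ]
  refine (hD.tendsto_setIntegral_rpow_mul_measureReal_Ioo_div hν hβ).congr' ?_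
  filter_upwards [Ioo_mem_nhdsGT one_pos] with s hs
  rw [setIntegral_rescaled_rpow_eq hs.1 (fun t ht =>
    hν.measure_Ioo_ne_top (Ioo.one_sub_mem hs) (one_sub_mul_mem_Ioo hs ht)) hβ, ← integral_div]
  simp_rw [mul_div_assoc]

end DeHaanGumbel

lemma cBeta_eq_setIntegral_rescaled (μ : Measure ℝ) {s : ℝ} (hs : 0 < s) (β : ℝ) :
    cBeta μ s β = ∫ u in Ioo (1 - s) 1, ((1 - u) / s) ^ β ∂(dQ μ) := by
  rw [cBeta, ← integral_const_mul]
  refine setIntegral_congr_fun measurableSet_Ioo fun u hu => ?_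
  simp only [div_rpow (sub_nonneg.2 hu.2.le) hs.le, rpow_neg hs.le]
  ring

/-- **Lemma 5.** If `F ∈ D(Λ)` then for each fixed `β > 0`,
`c(s,β)/c(s) → 1/β` as `s ↓ 0`. -/
theorem cBeta_div_c_tendsto
    (μ : Measure ℝ) [IsProbabilityMeasure μ] (F Q : ℝ → ℝ)
    (hF : F = distFun μ) (hQ : Q = quantileFun F)
    (hD : DeHaanGumbel Q) (β : ℝ) (hβ : 0 < β)
    (hfin : ∀ᶠ s in nhdsWithin (0:ℝ) (Set.Ioi 0),
      IntegrableOn (fun u : ℝ => (1 - u) ^ β) (Set.Ioo (1 - s) 1) (dQ μ))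
    (hc : ∀ᶠ s in nhdsWithin (0:ℝ) (Set.Ioi 0),
      IntegrableOn (fun u : ℝ => 1 - u) (Set.Ioo (1 - s) 1) (dQ μ) ∧ 0 < cFun μ s) :
    Tendsto (fun s : ℝ => cBeta μ s β / cFun μ s)
      (nhdsWithin 0 (Set.Ioi 0)) (nhds (1 / β)) := by
  subst hF hQ
  have hν := isLebesgueStieltjes_quantileFun_dQ μ
  have ratio := (hD.tendsto_setIntegral_rescaled_rpow_div_gumbelScale hν hβ).div
    (hD.tendsto_setIntegral_rescaled_rpow_div_gumbelScale hν one_pos) (by norm_num)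
  rw [div_one, div_one] at ratio
  refine ratio.congr' ?_
  filter_upwards [self_mem_nhdsWithin, hD.eventually_gumbelScale_pos hν.monotoneOn] with s hs pos
  rw [Pi.div_apply, div_div_div_cancel_right₀ pos.ne', cFun, cBeta_eq_setIntegral_rescaled μ hs,
    cBeta_eq_setIntegral_rescaled μ hs]
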